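/- Let A, B, C be a maximal positive solution of the E(1,1) negative cross curvature flow ODE system with A_0 > C_0 > 0 and 3 C_0 ≤ A_0. Then there exists a time t_1 ≥ 0 in the interval of existence such that 3 C(t_1) > A(t_1); i.e., the solution cannot satisfy 3C ≤ A for its entire interval of existence. -/

import Mathlib

/-- A triple of functions solves the `E(1,1)` negative cross curvature flow ODE system
(with positivity) on a set `s ⊆ ℝ`. -/
def IsSolE11 (A B C : ℝ → ℝ) (s : Set ℝ) : Prop :=
  ∀ t ∈ s,
    (0 < A t ∧ 0 < B t ∧ 0 < C t) ∧
    HasDerivAt A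
      (2 * A t * (A t + C t) ^ 3 * (3 * C t - A t) / (A t * B t * C t) ^ 2) t ∧
    HasDerivAt B
      (-2 * B t * (3 * A t - C t) * (3 * C t - A t) * (A t + C t) ^ 2 /
        (A t * B t * C t) ^ 2) t ∧
    HasDerivAt C
      (2 * C t * (A t + C t) ^ 3 * (3 * A t - C t) / (A t * B t * C t) ^ 2) t

/-- A maximal solution of the `E(1,1)` system on `{t | 0 ≤ t, t < T}` (`T ∈ (0,∞]` an
extended real): it is a solution that admits no extension to a strictly larger interval. -/
def IsMaxSolE11 (A B C : ℝ → ℝ) (T : EReal) : Prop :=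
  IsSolE11 A B C {t : ℝ | 0 ≤ t ∧ (t : EReal) < T} ∧
  ∀ (A' B' C' : ℝ → ℝ) (T' : EReal), T < T' →
    IsSolE11 A' B' C' {t : ℝ | 0 ≤ t ∧ (t : EReal) < T'} →
    ¬ (∀ t : ℝ, 0 ≤ t → (t : EReal) < T → A' t = A t ∧ B' t = B t ∧ C' t = C t)

/-!
Suppose `3C ≤ A` throughout. Then `A` is nonincreasing and `B`, `C` are nondecreasing. The one bound
that is not visible from the signs is the upper bound on `B`: since
`(log B)' = ((A - 3C) / (A + C)) (log C)' ≤ (log C)'`, the quotient `B / C` is nonincreasing. As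
`C ≤ A / 3 ≤ A₀ / 3`, the solution stays in a compact box inside the positive octant.

Moreover `(C²)' ≥ 36 (C / B)² ≥ 36 (C₀ / B₀)²`, so `C²` grows at least linearly while staying
bounded, and the existence time is finite. A maximal solution with finite existence time leaves
every compact subset of the octant, a contradiction.
-/

open Set Filter Topology

lemma monotoneOn_of_hasDerivAt_nonneg {f f' : ℝ → ℝ} {s : Set ℝ} (hs : Convex ℝ s)
    (hf : ∀ t ∈ s, HasDerivAt f (f' t) t) (hf' : ∀ t ∈ s, 0 ≤ f' t) : MonotoneOn f s :=
  monotoneOn_of_hasDerivWithinAt_nonneg hs (HasDerivAt.continuousOn hf)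
    (fun t ht ↦ (hf t (interior_subset ht)).hasDerivWithinAt)
    fun t ht ↦ hf' t (interior_subset ht)

lemma antitoneOn_of_hasDerivAt_nonpos {f f' : ℝ → ℝ} {s : Set ℝ} (hs : Convex ℝ s)
    (hf : ∀ t ∈ s, HasDerivAt f (f' t) t) (hf' : ∀ t ∈ s, f' t ≤ 0) : AntitoneOn f s :=
  antitoneOn_of_hasDerivWithinAt_nonpos hs (HasDerivAt.continuousOn hf)
    (fun t ht ↦ (hf t (interior_subset ht)).hasDerivWithinAt)
    fun t ht ↦ hf' t (interior_subset ht)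

lemma convex_setOf_nonneg_coe_lt (T : EReal) : Convex ℝ {t : ℝ | 0 ≤ t ∧ (t : EReal) < T} :=
  (ordConnected_Ici.inter
    (ordConnected_Iio.preimage_mono EReal.coe_strictMono.monotone)).convex

lemma setOf_nonneg_coe_lt_coe (τ : ℝ) : {t : ℝ | 0 ≤ t ∧ (t : EReal) < τ} = Ico 0 τ := by
  ext t
  simp only [mem_ofPred_eq, EReal.coe_lt_coe_iff, mem_Ico]

section Continuation

variable {E : Type*} [NormedAddCommGroup E] [NormedSpace ℝ E]

lemma exists_tendsto_nhdsLT_of_norm_hasDerivAt_le [CompleteSpace E] {f f' : ℝ → E} {a b M : ℝ}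
    (hab : a < b) (hf : ∀ t ∈ Ico a b, HasDerivAt f (f' t) t)
    (hM : ∀ t ∈ Ico a b, ‖f' t‖ ≤ M) : ∃ x, Tendsto f (𝓝[<] b) (𝓝 x) := by
  have hlip : LipschitzOnWith M.toNNReal f (Ico a b) :=
    (convex_Ico a b).lipschitzOnWith_of_nnnorm_hasDerivWithin_le
      (fun t ht ↦ (hf t ht).hasDerivWithinAt) fun t ht ↦ by
        rw [← norm_toNNReal]
        exact Real.toNNReal_le_toNNReal (hM t ht)
  have hcauchy : Cauchy (𝓝[<] b) := cauchy_nhds.mono nhdsWithin_le_nhds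
  exact CompleteSpace.complete <|
    hcauchy.map_of_le hlip.uniformContinuousOn (le_principal_iff.2 (Ico_mem_nhdsLT hab))

variable {F : E → E} {X Z : ℝ → E} {a τ b : ℝ}

lemma hasDerivWithinAt_Iic_of_tendsto_nhdsLT (haτ : a < τ) (hF : ContinuousAt F (X τ))
    (hX : ∀ t ∈ Ico a τ, HasDerivAt X (F (X t)) t) (hlim : Tendsto X (𝓝[<] τ) (𝓝 (X τ))) :
    HasDerivWithinAt X (F (X τ)) (Iic τ) τ := by
  have hmem : Ico a τ ∈ 𝓝[<] τ := Ico_mem_nhdsLT haτ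
  refine hasDerivWithinAt_Iic_of_tendsto_deriv
    (fun t ht ↦ (hX t ht).differentiableAt.differentiableWithinAt)
    (hlim.mono_left (nhdsWithin_mono τ fun t ht ↦ ht.2)) hmem ?_
  refine (hF.tendsto.comp hlim).congr' ?_
  filter_upwards [hmem] with t ht using (hX t ht).deriv.symm

lemma hasDerivAt_piecewise_Iio (haτ : a < τ) (hF : ContinuousAt F (Z τ))
    (hX : ∀ t ∈ Ico a τ, HasDerivAt X (F (X t)) t)
    (hZ : ∀ t ∈ Ico τ b, HasDerivAt Z (F (Z t)) t) (hlim : Tendsto X (𝓝[<] τ) (𝓝 (Z τ))) :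
    ∀ t ∈ Ico a b, HasDerivAt ((Iio τ).piecewise X Z) (F ((Iio τ).piecewise X Z t)) t := by
  set Y := (Iio τ).piecewise X Z
  have hYX : EqOn Y X (Iio τ) := piecewise_eqOn ..
  have hYZ : EqOn Y Z (Ici τ) := compl_Iio (a := τ) ▸ piecewise_eqOn_compl ..
  have hYτ : Y τ = Z τ := hYZ self_mem_Ici
  have hY_left : ∀ t ∈ Ico a τ, HasDerivAt Y (F (Y t)) t := fun t ht ↦ by
    rw [hYX ht.2]
    exact (hX t ht).congr_of_eventuallyEq (hYX.eventuallyEq_of_mem (Iio_mem_nhds ht.2))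
  intro t ht
  rcases lt_trichotomy t τ with htτ | rfl | hτt
  · exact hY_left t ⟨ht.1, htτ⟩
  · have hleft : HasDerivWithinAt Y (F (Y t)) (Iic t) t := by
      refine hasDerivWithinAt_Iic_of_tendsto_nhdsLT haτ (hYτ ▸ hF) hY_left ?_
      rw [hYτ]
      exact hlim.congr' (hYX.symm.eventuallyEq_of_mem self_mem_nhdsWithin)
    have hright : HasDerivWithinAt Y (F (Y t)) (Ici t) t := by
      rw [hYτ]
      exact (hZ t ⟨le_rfl, ht.2⟩).hasDerivWithinAt.congr hYZ hYτ
    simpa only [Iic_union_Ici, hasDerivWithinAt_univ] using hleft.union hright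
  · rw [hYZ hτt.le]
    exact (hZ t ⟨hτt.le, ht.2⟩).congr_of_eventuallyEq
      (hYZ.eventuallyEq_of_mem (Ici_mem_nhds hτt))

lemma exists_hasDerivAt_Ico_mem [CompleteSpace E] {x : E} {U : Set E}
    (hF : ContDiffAt ℝ 1 F x) (hU : U ∈ 𝓝 x) (τ : ℝ) :
    ∃ Z : ℝ → E, Z τ = x ∧ ∃ b > τ, ∀ t ∈ Ico τ b, Z t ∈ U ∧ HasDerivAt Z (F (Z t)) t := by
  obtain ⟨Z, rfl, ε, hε, hZ⟩ :=
    hF.exists_forall_mem_closedBall_exists_eq_forall_mem_Ioo_hasDerivAt₀ τ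
  have hZU : ∀ᶠ t in 𝓝 τ, Z t ∈ U :=
    (hZ τ ⟨sub_lt_self τ hε, lt_add_of_pos_right τ hε⟩).continuousAt.eventually_mem hU
  have hZF : ∀ᶠ t in 𝓝 τ, HasDerivAt Z (F (Z t)) t := by
    filter_upwards [Ioo_mem_nhds (sub_lt_self τ hε) (lt_add_of_pos_right τ hε)] using hZ
  obtain ⟨b, hb, hsub⟩ := mem_nhdsGE_iff_exists_Ico_subset.1
    (nhdsWithin_le_nhds (hZU.and hZF))
  exact ⟨Z, rfl, b, hb, hsub⟩

theorem exists_extension_of_forall_mem_isCompact [CompleteSpace E] {K U : Set E} (haτ : a < τ)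
    (hK : IsCompact K) (hU : IsOpen U) (hKU : K ⊆ U) (hF : ContDiffOn ℝ 1 F U)
    (hX : ∀ t ∈ Ico a τ, HasDerivAt X (F (X t)) t) (hXK : ∀ t ∈ Ico a τ, X t ∈ K) :
    ∃ Y : ℝ → E, EqOn Y X (Iio τ) ∧
      ∃ b > τ, ∀ t ∈ Ico a b, Y t ∈ U ∧ HasDerivAt Y (F (Y t)) t := by
  obtain ⟨M, hM⟩ := hK.exists_bound_of_continuousOn (hF.continuousOn.mono hKU)
  obtain ⟨x, hx⟩ := exists_tendsto_nhdsLT_of_norm_hasDerivAt_le haτ hX fun t ht ↦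
    hM _ (hXK t ht)
  have hxK : x ∈ K := hK.isClosed.mem_of_tendsto hx <| by
    filter_upwards [Ico_mem_nhdsLT haτ] using hXK
  have hxU : U ∈ 𝓝 x := hU.mem_nhds (hKU hxK)
  have hFx : ContDiffAt ℝ 1 F x := hF.contDiffAt hxU
  obtain ⟨Z, rfl, b, hb, hZ⟩ := exists_hasDerivAt_Ico_mem hFx hxU τ
  refine ⟨(Iio τ).piecewise X Z, piecewise_eqOn .., b, hb, fun t ht ↦ ⟨?_,
    hasDerivAt_piecewise_Iio haτ hFx.continuousAt hX (fun t ht ↦ (hZ t ht).2) hx t ht⟩⟩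
  rcases lt_or_ge t τ with htτ | hτt
  · rw [piecewise_eq_of_mem (Iio τ) X Z htτ]
    exact hKU (hXK t ⟨ht.1, htτ⟩)
  · rw [piecewise_eq_of_notMem (Iio τ) X Z (notMem_Iio.2 hτt)]
    exact (hZ t ⟨hτt, ht.2⟩).1

end Continuation

/-- The right-hand side of the `E(1,1)` system as a vector field in the variables `(A, B, C)`. -/
noncomputable def fieldE11 (p : ℝ × ℝ × ℝ) : ℝ × ℝ × ℝ :=
  (2 * p.1 * (p.1 + p.2.2) ^ 3 * (3 * p.2.2 - p.1) / (p.1 * p.2.1 * p.2.2) ^ 2,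
    -2 * p.2.1 * (3 * p.1 - p.2.2) * (3 * p.2.2 - p.1) * (p.1 + p.2.2) ^ 2 /
      (p.1 * p.2.1 * p.2.2) ^ 2,
    2 * p.2.2 * (p.1 + p.2.2) ^ 3 * (3 * p.1 - p.2.2) / (p.1 * p.2.1 * p.2.2) ^ 2)

/-- The open positive octant of `ℝ³`: the phase space of the `E(1,1)` system, on which its vector
field is smooth. -/
def posOctant : Set (ℝ × ℝ × ℝ) := Ioi 0 ×ˢ Ioi 0 ×ˢ Ioi 0

lemma isOpen_posOctant : IsOpen posOctant := isOpen_Ioi.prod (isOpen_Ioi.prod isOpen_Ioi)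

lemma Icc_subset_posOctant {p q : ℝ × ℝ × ℝ} (hp : p ∈ posOctant) : Icc p q ⊆ posOctant :=
  fun _ hr ↦ ⟨hp.1.trans_le hr.1.1, hp.2.1.trans_le hr.1.2.1, hp.2.2.trans_le hr.1.2.2⟩

lemma contDiffOn_fieldE11 : ContDiffOn ℝ 1 fieldE11 posOctant := by
  have hne : ∀ p ∈ posOctant, (p.1 * p.2.1 * p.2.2) ^ 2 ≠ 0 := fun p ⟨ha, hb, hc⟩ ↦
    pow_ne_zero 2 (mul_pos (mul_pos ha hb) hc).ne'
  unfold fieldE11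
  refine ContDiffOn.prodMk ?_ (ContDiffOn.prodMk ?_ ?_) <;>
    exact ContDiffOn.div (by fun_prop) (by fun_prop) hne

lemma isSolE11_iff {X : ℝ → ℝ × ℝ × ℝ} {s : Set ℝ} :
    IsSolE11 (fun t ↦ (X t).1) (fun t ↦ (X t).2.1) (fun t ↦ (X t).2.2) s ↔
      ∀ t ∈ s, X t ∈ posOctant ∧ HasDerivAt X (fieldE11 (X t)) t :=
  forall₂_congr fun _ _ ↦ and_congr Iff.rfl
    ⟨fun ⟨hA, hB, hC⟩ ↦ hA.prodMk (hB.prodMk hC), fun h ↦ ⟨h.fst, h.snd.fst, h.snd.snd⟩⟩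

theorem IsMaxSolE11.exists_notMem_of_isCompact {A B C : ℝ → ℝ} {τ : ℝ} {K : Set (ℝ × ℝ × ℝ)}
    (hmax : IsMaxSolE11 A B C τ) (hτ : 0 < τ) (hK : IsCompact K) (hKpos : K ⊆ posOctant) :
    ∃ t ∈ Ico 0 τ, (A t, B t, C t) ∉ K := by
  by_contra! hXK
  obtain ⟨hsol, hmaximal⟩ := hmax
  rw [setOf_nonneg_coe_lt_coe] at hsol
  have hX := (isSolE11_iff (X := fun t ↦ (A t, B t, C t))).1 hsol
  obtain ⟨Y, hYX, b, hb, hY⟩ := exists_extension_of_forall_mem_isCompact hτ hK isOpen_posOctant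
    hKpos contDiffOn_fieldE11 (fun t ht ↦ (hX t ht).2) hXK
  refine hmaximal (fun t ↦ (Y t).1) (fun t ↦ (Y t).2.1) (fun t ↦ (Y t).2.2) b
    (EReal.coe_lt_coe_iff.2 hb) ?_ fun t _ ht ↦ ?_
  · rw [setOf_nonneg_coe_lt_coe]
    exact isSolE11_iff.2 hY
  · simp only [hYX (EReal.coe_lt_coe_iff.1 ht), and_self]

lemma mul_sq_div_le_of_three_mul_le {a b c : ℝ} (ha : 0 < a) (hc : 0 ≤ c) (h : 3 * c ≤ a) :
    36 * (c / b) ^ 2 ≤ 4 * (a + c) ^ 3 * (3 * a - c) / (a * b) ^ 2 := by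
  have hac : a ≤ 3 * a - c := by linarith
  calc 36 * (c / b) ^ 2 = 4 * (3 * c) ^ 2 / b ^ 2 := by ring
    _ ≤ 4 * a ^ 2 / b ^ 2 := by gcongr
    _ = 4 * a ^ 3 * a / (a * b) ^ 2 := by
      rw [mul_pow, ← mul_div_mul_left _ _ (pow_pos ha 2).ne']
      ring
    _ ≤ 4 * (a + c) ^ 3 * (3 * a - c) / (a * b) ^ 2 := by
      gcongr
      linarith

namespace IsSolE11

variable {A B C : ℝ → ℝ} {s : Set ℝ} {t₀ t : ℝ}

lemma le_three_mul_of_three_mul_le (hsol : IsSolE11 A B C s) (hcone : ∀ t ∈ s, 3 * C t ≤ A t) :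
    ∀ t ∈ s, C t ≤ 3 * A t := fun t ht ↦ by
  linarith [hcone t ht, (hsol t ht).1.1, (hsol t ht).1.2.2]

lemma antitoneOn_A (hsol : IsSolE11 A B C s) (hs : Convex ℝ s)
    (hcone : ∀ t ∈ s, 3 * C t ≤ A t) : AntitoneOn A s := by
  refine antitoneOn_of_hasDerivAt_nonpos hs (fun t ht ↦ (hsol t ht).2.1) fun t ht ↦ ?_
  obtain ⟨⟨hA, -, hC⟩, -⟩ := hsol t ht
  have hAC : 3 * C t - A t ≤ 0 := sub_nonpos.2 (hcone t ht)
  exact div_nonpos_of_nonpos_of_nonneg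
    (mul_nonpos_of_nonneg_of_nonpos (by positivity) hAC) (by positivity)

lemma monotoneOn_B (hsol : IsSolE11 A B C s) (hs : Convex ℝ s)
    (hcone : ∀ t ∈ s, 3 * C t ≤ A t) : MonotoneOn B s := by
  refine monotoneOn_of_hasDerivAt_nonneg hs (fun t ht ↦ (hsol t ht).2.2.1) fun t ht ↦ ?_
  obtain ⟨⟨-, hB, -⟩, -⟩ := hsol t ht
  have hCA : 0 ≤ 3 * A t - C t := sub_nonneg.2 (hsol.le_three_mul_of_three_mul_le hcone t ht)
  have hAC : 0 ≤ A t - 3 * C t := sub_nonneg.2 (hcone t ht)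
  calc (0 : ℝ) ≤ 2 * B t * (3 * A t - C t) * (A t - 3 * C t) * (A t + C t) ^ 2 /
        (A t * B t * C t) ^ 2 := by positivity
    _ = _ := by ring

lemma monotoneOn_C (hsol : IsSolE11 A B C s) (hs : Convex ℝ s)
    (hCA : ∀ t ∈ s, C t ≤ 3 * A t) : MonotoneOn C s := by
  refine monotoneOn_of_hasDerivAt_nonneg hs (fun t ht ↦ (hsol t ht).2.2.2) fun t ht ↦ ?_
  obtain ⟨⟨hA, -, hC⟩, -⟩ := hsol t ht
  have hCA : 0 ≤ 3 * A t - C t := sub_nonneg.2 (hCA t ht)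
  positivity

lemma hasDerivAt_B_div_C (hsol : IsSolE11 A B C s) (ht : t ∈ s) :
    HasDerivAt (fun t ↦ B t / C t)
      (-(8 * B t * (3 * A t - C t) * (A t + C t) ^ 2 / (A t * B t * C t) ^ 2)) t := by
  obtain ⟨⟨-, -, hC⟩, -, hB', hC'⟩ := hsol t ht
  refine (hB'.fun_div hC' hC.ne').congr_deriv ?_
  field_simp
  ring

lemma antitoneOn_B_div_C (hsol : IsSolE11 A B C s) (hs : Convex ℝ s)
    (hCA : ∀ t ∈ s, C t ≤ 3 * A t) : AntitoneOn (fun t ↦ B t / C t) s := by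
  refine antitoneOn_of_hasDerivAt_nonpos hs (fun t ht ↦ hsol.hasDerivAt_B_div_C ht)
    fun t ht ↦ ?_
  obtain ⟨⟨-, hB, -⟩, -⟩ := hsol t ht
  have hCA : 0 ≤ 3 * A t - C t := sub_nonneg.2 (hCA t ht)
  exact neg_nonpos.2 (by positivity)

lemma C_le_A_div_three (hsol : IsSolE11 A B C s) (hs : Convex ℝ s)
    (hcone : ∀ t ∈ s, 3 * C t ≤ A t) (ht₀ : t₀ ∈ s) (ht : t ∈ s) (hle : t₀ ≤ t) :
    C t ≤ A t₀ / 3 := by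
  linarith [hcone t ht, hsol.antitoneOn_A hs hcone ht₀ ht hle]

theorem mem_Icc_of_three_mul_le (hsol : IsSolE11 A B C s) (hs : Convex ℝ s)
    (hcone : ∀ t ∈ s, 3 * C t ≤ A t) (ht₀ : t₀ ∈ s) (ht : t ∈ s) (hle : t₀ ≤ t) :
    (A t, B t, C t) ∈
      Icc (3 * C t₀, B t₀, C t₀) (A t₀, B t₀ / C t₀ * (A t₀ / 3), A t₀ / 3) := by
  have hCA := hsol.le_three_mul_of_three_mul_le hcone
  have hA_le : A t ≤ A t₀ := hsol.antitoneOn_A hs hcone ht₀ ht hle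
  have hB_ge : B t₀ ≤ B t := hsol.monotoneOn_B hs hcone ht₀ ht hle
  have hC_ge : C t₀ ≤ C t := hsol.monotoneOn_C hs hCA ht₀ ht hle
  have hC_le : C t ≤ A t₀ / 3 := hsol.C_le_A_div_three hs hcone ht₀ ht hle
  have hA_ge : 3 * C t₀ ≤ A t := by linarith [hcone t ht]
  have hB_le : B t ≤ B t₀ / C t₀ * (A t₀ / 3) := by
    obtain ⟨⟨-, hB₀, hC₀⟩, -⟩ := hsol t₀ ht₀
    calc B t ≤ B t₀ / C t₀ * C t :=
          (div_le_iff₀ (hsol t ht).1.2.2).1 (hsol.antitoneOn_B_div_C hs hCA ht₀ ht hle)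
      _ ≤ B t₀ / C t₀ * (A t₀ / 3) := by gcongr
  exact ⟨⟨hA_ge, hB_ge, hC_ge⟩, ⟨hA_le, hB_le, hC_le⟩⟩

lemma hasDerivAt_C_sq (hsol : IsSolE11 A B C s) (ht : t ∈ s) :
    HasDerivAt (fun t ↦ C t ^ 2)
      (4 * (A t + C t) ^ 3 * (3 * A t - C t) / (A t * B t) ^ 2) t := by
  obtain ⟨⟨-, -, hC⟩, -, -, hC'⟩ := hsol t ht
  refine (hC'.fun_pow 2).congr_deriv ?_
  field_simp
  ring

lemma mul_sub_le_C_sq_sub_C_sq (hsol : IsSolE11 A B C s) (hs : Convex ℝ s)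
    (hcone : ∀ t ∈ s, 3 * C t ≤ A t) (ht₀ : t₀ ∈ s) (ht : t ∈ s) (hle : t₀ ≤ t) :
    36 * (C t₀ / B t₀) ^ 2 * (t - t₀) ≤ C t ^ 2 - C t₀ ^ 2 := by
  have hCA := hsol.le_three_mul_of_three_mul_le hcone
  have hconv : Convex ℝ (Icc t₀ t) := convex_Icc t₀ t
  have hsub : Icc t₀ t ⊆ s := hs.ordConnected.out ht₀ ht
  have hd : ∀ u ∈ Icc t₀ t, HasDerivAt (fun t ↦ C t ^ 2) _ u := fun u hu ↦
    hsol.hasDerivAt_C_sq (hsub hu)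
  refine hconv.mul_sub_le_image_sub_of_le_deriv (HasDerivAt.continuousOn hd)
    (fun u hu ↦ (hd u (interior_subset hu)).differentiableAt.differentiableWithinAt)
    (fun u hu ↦ ?_) t₀ (left_mem_Icc.2 hle) t (right_mem_Icc.2 hle) hle
  replace hu := interior_subset hu
  rw [(hd u hu).deriv]
  obtain ⟨⟨hA, hB, hC⟩, -⟩ := hsol u (hsub hu)
  obtain ⟨⟨-, hB₀, hC₀⟩, -⟩ := hsol t₀ ht₀
  have hquot : C t₀ / B t₀ ≤ C u / B u := by
    rw [← inv_div, ← inv_div (B u)]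
    exact inv_anti₀ (div_pos hB hC) (hsol.antitoneOn_B_div_C hs hCA ht₀ (hsub hu) hu.1)
  calc 36 * (C t₀ / B t₀) ^ 2 ≤ 36 * (C u / B u) ^ 2 := by gcongr
    _ ≤ _ := mul_sq_div_le_of_three_mul_le hA hC.le (hcone u (hsub hu))

theorem bddAbove_of_three_mul_le (hsol : IsSolE11 A B C s) (hs : Convex ℝ s)
    (hcone : ∀ t ∈ s, 3 * C t ≤ A t) : BddAbove s := by
  rcases s.eq_empty_or_nonempty with rfl | ⟨t₀, ht₀⟩
  · exact bddAbove_empty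
  obtain ⟨⟨-, hB₀, hC₀⟩, -⟩ := hsol t₀ ht₀
  set k := 36 * (C t₀ / B t₀) ^ 2
  have hk : 0 < k := by positivity
  refine ⟨t₀ + (A t₀ / 3) ^ 2 / k, fun t ht ↦ ?_⟩
  rcases le_total t t₀ with hle | hle
  · exact hle.trans (le_add_of_nonneg_right (by positivity))
  rw [← sub_le_iff_le_add', le_div_iff₀' hk]
  have hC_pos : 0 < C t := (hsol t ht).1.2.2
  calc k * (t - t₀) ≤ C t ^ 2 - C t₀ ^ 2 := hsol.mul_sub_le_C_sq_sub_C_sq hs hcone ht₀ ht hle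
    _ ≤ C t ^ 2 := sub_le_self _ (sq_nonneg _)
    _ ≤ (A t₀ / 3) ^ 2 := by
      gcongr
      exact hsol.C_le_A_div_three hs hcone ht₀ ht hle

end IsSolE11

/-- For a maximal positive solution of the `E(1,1)` negative cross curvature flow with
`A0 > C0 > 0` and `3C0 ≤ A0`, there is a time `t1 ≥ 0` in the interval of existence at
which `3C(t1) > A(t1)`; i.e. the condition `3C ≤ A` cannot persist. -/
theorem sol_E11_leaves_cone
    (A0 B0 C0 : ℝ) (hB0 : 0 < B0) (hC0 : 0 < C0)
    (hA0C0 : A0 > C0) (h3C0 : 3 * C0 ≤ A0)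
    (A B C : ℝ → ℝ) (T : EReal) (hT : 0 < T)
    (hmax : IsMaxSolE11 A B C T)
    (hinitA : A 0 = A0) (hinitB : B 0 = B0) (hinitC : C 0 = C0) :
    ∃ t1 : ℝ, 0 ≤ t1 ∧ (t1 : EReal) < T ∧ 3 * C t1 > A t1 := by
  by_contra! hcone
  replace hcone : ∀ t ∈ {t : ℝ | 0 ≤ t ∧ (t : EReal) < T}, 3 * C t ≤ A t :=
    fun t ht ↦ hcone t ht.1 ht.2
  have hconv := convex_setOf_nonneg_coe_lt T
  have hT_top : T ≠ ⊤ := by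
    rintro rfl
    refine not_bddAbove_Ici (0 : ℝ) ((hmax.1.bddAbove_of_three_mul_le hconv hcone).mono ?_)
    exact fun t ht ↦ ⟨ht, EReal.coe_lt_top t⟩
  lift T to ℝ using ⟨hT_top, hT.ne_bot⟩
  subst hinitA hinitB hinitC
  have hbox : Icc (3 * C 0, B 0, C 0) (A 0, B 0 / C 0 * (A 0 / 3), A 0 / 3) ⊆ posOctant :=
    Icc_subset_posOctant ⟨by simpa using hC0, hB0, hC0⟩
  obtain ⟨t, ht, hnotMem⟩ :=
    hmax.exists_notMem_of_isCompact (EReal.coe_pos.1 hT) isCompact_Icc hbox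
  rw [← setOf_nonneg_coe_lt_coe] at ht
  exact hnotMem (hmax.1.mem_Icc_of_three_mul_le hconv hcone ⟨le_rfl, hT⟩ ht ht.1)
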